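/- arXiv:2103.05574 — 7 statements merged into one kernel-verified Lean document; each statement's English description precedes it below -/
import Mathlib

section
/- Let p ≥ 2, let μ₁ ∈ ℝ^p and β ∈ ℝ, and let X ∼ N(μ₁, I_p) and Y ∼ N(βμ₁, I_p) be independent p-dimensional Gaussian vectors. Define R(β̂) = inf_{b ∈ ℝ} (Y − bX)ᵀ(Y − bX)/(1 + b²). Then R(β̂) is stochastically dominated by the chi-squared distribution with p − 1 degrees of freedom: for every t ≥ 0, P(R(β̂) > t) ≤ P(Z > t) where Z ∼ χ²_{p−1}. -/
open MeasureTheory ProbabilityTheory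

/-- The multivariate normal distribution `N(μ, I_p)` on `ℝ^p`, realized as the product of
independent one-dimensional Gaussians `N(μ i, 1)`. -/
noncomputable def mvGaussianId (p : ℕ) (μ : Fin p → ℝ) : Measure (Fin p → ℝ) :=
  Measure.pi fun i => gaussianReal (μ i) 1

/-- The chi-squared distribution with `k` degrees of freedom, i.e. the Gamma distribution
with shape `k/2` and rate `1/2`. -/
noncomputable def chiSquared (k : ℝ) : Measure ℝ :=
  gammaMeasure (k / 2) (1 / 2)

lemma aux_gauss_sq (t : ℝ) :
    ∫ x : ℝ, Real.exp (t * x ^ 2) ∂(gaussianReal 0 1) = √((1 / 2) / (1 / 2 - t)) := by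
  rw [integral_gaussianReal_eq_integral_smul one_ne_zero]
  have h1 : ∀ x : ℝ, gaussianPDFReal 0 1 x • Real.exp (t * x ^ 2)
      = (√(2 * Real.pi))⁻¹ * Real.exp (-(1 / 2 - t) * x ^ 2) := by
    intro x
    rw [gaussianPDFReal, smul_eq_mul, mul_assoc, ← Real.exp_add]
    have h2 : (2 : ℝ) * Real.pi * ((1 : NNReal) : ℝ) = 2 * Real.pi := by simp
    have h3 : -(x - 0) ^ 2 / (2 * ((1 : NNReal) : ℝ)) + t * x ^ 2 = -(1 / 2 - t) * x ^ 2 := by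
      simp; ring
    rw [h2, h3]
  simp_rw [h1]
  rw [integral_const_mul, integral_gaussian]
  rw [← Real.sqrt_inv, ← Real.sqrt_mul (by positivity)]
  congr 1
  have := Real.pi_ne_zero
  field_simp

lemma aux_mgf_gamma (k : ℕ) (hk : 0 < k) (t : ℝ) :
    mgf id (gammaMeasure ((k : ℝ) / 2) (1 / 2)) t = √((1 / 2) / (1 / 2 - t)) ^ k := by
  have ha : 0 < (k : ℝ) / 2 := by positivity
  generalize haa : (k : ℝ) / 2 = a at *
  rw [mgf, gammaMeasure,
    integral_withDensity_eq_integral_toReal_smul (by unfold gammaPDF; fun_prop)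
      (ae_of_all _ fun _ => by simp [gammaPDF])]
  have h0 : ∀ x : ℝ, (gammaPDF a (1 / 2) x).toReal = gammaPDFReal a (1 / 2) x := fun x =>
    ENNReal.toReal_ofReal (gammaPDFReal_nonneg ha (by norm_num) x)
  simp_rw [h0]
  rw [← setIntegral_eq_integral_of_forall_compl_eq_zero (s := Set.Ici 0),
    integral_Ici_eq_integral_Ioi]
  · have h1 : ∀ x ∈ Set.Ioi (0 : ℝ), gammaPDFReal a (1 / 2) x • Real.exp (t * id x)
      = (((1 / 2 : ℝ) ^ a / Real.Gamma a : ℝ)) *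
        (x ^ (a - 1) * Real.exp (-((1 / 2 - t) * x))) := by
      intro x hx
      have hx : 0 < x := hx
      rw [gammaPDFReal, if_pos hx.le, smul_eq_mul]
      rw [mul_assoc, mul_assoc, ← Real.exp_add]
      simp only [id]
      ring_nf
    rw [setIntegral_congr_fun measurableSet_Ioi h1, integral_const_mul]
    rcases lt_or_ge t (1 / 2) with ht | ht
    · have hr : 0 < 1 / 2 - t := by linarith
      rw [Real.integral_rpow_mul_exp_neg_mul_Ioi ha hr, Real.sqrt_eq_rpow, ← Real.rpow_mul_natCast
        (by positivity), show 1 / 2 * (k : ℝ) = a by rw [← haa]; ring, div_eq_mul_one_div (1 / 2)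
          (1 / 2 - t), Real.mul_rpow (by positivity) (by positivity)]
      have : Real.Gamma a ≠ 0 := (Real.Gamma_pos_of_pos ha).ne'
      field_simp
    · rw [integral_undef, mul_zero, Real.sqrt_eq_zero_of_nonpos, zero_pow hk.ne']
      · exact div_nonpos_of_nonneg_of_nonpos (by norm_num) (by linarith)
      · intro h
        apply not_integrableOn_Ioi_rpow (a - 1)
        refine Integrable.mono' h (by fun_prop) ?_
        filter_upwards [ae_restrict_mem measurableSet_Ioi] with x hx
        have hx : 0 < x := hx
        rw [Real.norm_of_nonneg (by positivity)]
        refine le_mul_of_one_le_right (by positivity) (Real.one_le_exp ?_)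
        nlinarith
  · intro x hx
    have : ¬ 0 ≤ x := hx
    simp [gammaPDFReal, this]

/-- A probability law with the right mgf is the chi-squared law. -/
lemma aux_law (k : ℕ) (hk : 0 < k) (ν : Measure ℝ) [IsProbabilityMeasure ν]
    (h : ∀ t, mgf id ν t = √((1 / 2) / (1 / 2 - t)) ^ k) :
    ν = gammaMeasure ((k : ℝ) / 2) (1 / 2) := by
  have := isProbabilityMeasure_gammaMeasure (a := (k : ℝ) / 2) (r := 1 / 2)
    (by positivity) (by norm_num)
  have heq : mgf id ν = mgf id (gammaMeasure ((k : ℝ) / 2) (1 / 2)) := by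
    ext t; rw [h, aux_mgf_gamma k hk]
  have key := eqOn_complexMGF_of_mgf heq
  have h0 : (0 : ℝ) ∈ interior (integrableExpSet id ν) := by
    refine mem_interior.2 ⟨Set.Iio (1 / 2), ?_, isOpen_Iio, by norm_num⟩
    intro t ht
    have ht : t < 1 / 2 := ht
    by_contra hn
    have h2 : mgf id ν t = 0 := integral_undef hn
    rw [h] at h2
    have : 0 < 1 / 2 - t := by linarith
    have : 0 < √((1 / 2) / (1 / 2 - t)) ^ k := by positivity
    linarith
  apply Measure.ext_of_charFun
  ext t
  have := key (x := t * Complex.I) (by simpa using h0)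
  simpa [complexMGF_id_mul_I] using this

/-- sum of squares of all but one coordinate -/
lemma aux_pi (p : ℕ) (hp : 2 ≤ p) (i₀ : Fin p) :
    (Measure.pi (fun _ : Fin p => gaussianReal 0 1)).map
      (fun x => ∑ i ∈ Finset.univ.erase i₀, x i ^ 2) =
      gammaMeasure (((p : ℝ) - 1) / 2) (1 / 2) := by
  have hm : Measurable (fun x : Fin p → ℝ => ∑ i ∈ Finset.univ.erase i₀, x i ^ 2) := by fun_prop
  have := Measure.isProbabilityMeasure_map (μ := Measure.pi (fun _ : Fin p => gaussianReal 0 1))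
    hm.aemeasurable
  have := aux_law (p - 1) (by omega) (h := fun t => ?_) (ν := (Measure.pi (fun _ : Fin p =>
    gaussianReal 0 1)).map (fun x => ∑ i ∈ Finset.univ.erase i₀, x i ^ 2))
  · rw [this]; push_cast [show 1 ≤ p by omega]; rfl
  · rw [mgf_id_map hm.aemeasurable, mgf]
    have h1 : ∀ x : Fin p → ℝ, Real.exp (t * ∑ i ∈ Finset.univ.erase i₀, x i ^ 2)
        = ∏ i, (fun (i : Fin p) (y : ℝ) => if i = i₀ then 1 else Real.exp (t * y ^ 2)) i (x i) := by
      intro x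
      rw [Finset.mul_sum, Real.exp_sum, ← Finset.mul_prod_erase _ _ (Finset.mem_univ i₀)]
      simp only [if_true, one_mul]
      exact Finset.prod_congr rfl fun i hi => by simp [Finset.ne_of_mem_erase hi]
    rw [integral_congr_ae (ae_of_all _ h1), integral_fintype_prod_eq_prod (μ := fun _ => gaussianReal 0 1)
      (fun (i : Fin p) (y : ℝ) => if i = i₀ then 1 else Real.exp (t * y ^ 2)), ← Finset.mul_prod_erase _ _ (Finset.mem_univ i₀)]
    rw [Finset.prod_congr rfl (g := fun _ => √((1 / 2) / (1 / 2 - t)))]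
    · simp [div_pow]
    · intro i hi
      simp [Finset.ne_of_mem_erase hi, aux_gauss_sq]

lemma aux_det (p : ℕ) (x y : Fin p → ℝ) (r : ℝ)
    (hr : r = ⨅ b : ℝ, (∑ i, (y i - b * x i) ^ 2) / (1 + b ^ 2)) (c d : ℝ) :
    r * (c ^ 2 + d ^ 2) ≤ ∑ i, (d * y i - c * x i) ^ 2 := by
  have hb : ∀ b : ℝ, r * (1 + b ^ 2) ≤ ∑ i, (y i - b * x i) ^ 2 := by
    intro b
    rw [← le_div_iff₀ (by positivity), hr]
    exact ciInf_le ⟨0, by rintro _ ⟨b, rfl⟩; positivity⟩ b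
  have hd : ∀ d : ℝ, d ≠ 0 → r * (c ^ 2 + d ^ 2) ≤ ∑ i, (d * y i - c * x i) ^ 2 := by
    intro d hd
    have := mul_le_mul_of_nonneg_left (hb (c / d)) (sq_nonneg d)
    rw [Finset.mul_sum] at this
    have e1 : d ^ 2 * (r * (1 + (c / d) ^ 2)) = r * (c ^ 2 + d ^ 2) := by
      field_simp; ring
    rw [e1] at this
    refine this.trans (le_of_eq ?_)
    · refine Finset.sum_congr rfl fun i _ => ?_
      field_simp
  have hcl : IsClosed {d : ℝ | r * (c ^ 2 + d ^ 2) ≤ ∑ i, (d * y i - c * x i) ^ 2} :=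
    isClosed_le (by fun_prop) (by fun_prop)
  have hdense : Dense ({0}ᶜ : Set ℝ) := dense_compl_singleton 0
  have h2 : closure ({0}ᶜ : Set ℝ) ⊆
      {d : ℝ | r * (c ^ 2 + d ^ 2) ≤ ∑ i, (d * y i - c * x i) ^ 2} :=
    closure_minimal (fun d h => hd d h) hcl
  exact h2 (hdense d)

/-- residual sum of squares of `v` on `u` -/
noncomputable def auxQ {p : ℕ} (u v : Fin p → ℝ) : ℝ :=
  ∑ i, (v i - (∑ j, u j * v j) / (∑ j, u j ^ 2) * u i) ^ 2

lemma aux_R_le (p : ℕ) (x y : Fin p → ℝ) (r β s : ℝ) (hs : s ^ 2 = 1 + β ^ 2)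
    (hr : r = ⨅ b : ℝ, (∑ i, (y i - b * x i) ^ 2) / (1 + b ^ 2)) :
    r ≤ auxQ (fun i => (1 / s) * x i + (β / s) * y i)
      (fun i => (1 / s) * y i - (β / s) * x i) := by
  have hr0 : 0 ≤ r := by rw [hr]; exact Real.iInf_nonneg fun b => by positivity
  have hs0 : s ≠ 0 := by rintro rfl; nlinarith [sq_nonneg β]
  unfold auxQ
  generalize (∑ j : Fin p, (1 / s * x j + β / s * y j) * (1 / s * y j - β / s * x j)) /
    (∑ j : Fin p, (1 / s * x j + β / s * y j) ^ 2) = a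
  have := aux_det p x y r hr (β / s + a / s) (1 / s - a * β / s)
  have h2 : (β / s + a / s) ^ 2 + (1 / s - a * β / s) ^ 2 = 1 + a ^ 2 := by
    field_simp
    rw [hs]; ring
  rw [h2] at this
  calc r ≤ r * (1 + a ^ 2) := by nlinarith [mul_nonneg hr0 (sq_nonneg a)]
    _ ≤ _ := this
    _ = _ := Finset.sum_congr rfl fun i _ => by ring

lemma aux_rot (p : ℕ) (a b : ℝ) (hab : a ^ 2 + b ^ 2 = 1) :
    MeasurePreserving (fun q : (Fin p → ℝ) × (Fin p → ℝ) =>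
        ((fun i => a * q.1 i + b * q.2 i, fun i => a * q.2 i - b * q.1 i) :
          (Fin p → ℝ) × (Fin p → ℝ)))
      ((Measure.pi fun _ => gaussianReal 0 1).prod (Measure.pi fun _ => gaussianReal 0 1))
      ((Measure.pi fun _ => gaussianReal 0 1).prod (Measure.pi fun _ => gaussianReal 0 1)) := by
  let L : EuclideanSpace ℝ (Fin p ⊕ Fin p) →ₗ[ℝ] EuclideanSpace ℝ (Fin p ⊕ Fin p) :=
    { toFun := fun z => WithLp.toLp 2 (Sum.elim
        (fun i => a * z (Sum.inl i) + b * z (Sum.inr i))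
        (fun i => a * z (Sum.inr i) - b * z (Sum.inl i)))
      map_add' := by
        intro x y; ext i; rcases i with i | i <;> simp <;> ring
      map_smul' := by
        intro x y; ext i; rcases i with i | i <;> simp <;> ring }
  let Li : EuclideanSpace ℝ (Fin p ⊕ Fin p) →ₗᵢ[ℝ] EuclideanSpace ℝ (Fin p ⊕ Fin p) := 
    { L with
      norm_map' := by
        intro z
        rw [← sq_eq_sq₀ (norm_nonneg _) (norm_nonneg _), EuclideanSpace.real_norm_sq_eq,
          EuclideanSpace.real_norm_sq_eq, Fintype.sum_sum_type, Fintype.sum_sum_type,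
          ← Finset.sum_add_distrib, ← Finset.sum_add_distrib]
        refine Finset.sum_congr rfl fun i _ => ?_
        simp [L]
        linear_combination (z (Sum.inl i) ^ 2 + z (Sum.inr i) ^ 2) * hab }
  let Le : EuclideanSpace ℝ (Fin p ⊕ Fin p) ≃ₗᵢ[ℝ] EuclideanSpace ℝ (Fin p ⊕ Fin p) := Li.toLinearIsometryEquiv rfl
  have m1 := measurePreserving_sumPiEquivProdPi_symm (ι := Fin p) (ι' := Fin p)
    (X := fun _ => ℝ) (fun _ => gaussianReal 0 1)
  have m1' := measurePreserving_sumPiEquivProdPi (ι := Fin p) (ι' := Fin p)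
    (X := fun _ => ℝ) (fun _ => gaussianReal 0 1)
  have m2 : MeasurePreserving (MeasurableEquiv.toLp 2 (Fin p ⊕ Fin p → ℝ))
      (Measure.pi fun _ => gaussianReal 0 1) (stdGaussian (EuclideanSpace ℝ (Fin p ⊕ Fin p))) :=
    ⟨MeasurableEquiv.measurable _, map_pi_eq_stdGaussian⟩
  have m3 : MeasurePreserving Le (stdGaussian (EuclideanSpace ℝ (Fin p ⊕ Fin p))) (stdGaussian (EuclideanSpace ℝ (Fin p ⊕ Fin p))) :=
    ⟨Le.continuous.measurable, stdGaussian_map Le⟩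
  exact m1'.comp ((m2.symm).comp (m3.comp (m2.comp m1)))

lemma aux_Q_law_det (p : ℕ) (u : Fin p → ℝ) (hu : u ≠ 0) (b : OrthonormalBasis (Fin p) ℝ
    (EuclideanSpace ℝ (Fin p))) (i₀ : Fin p) (hb : b i₀ = (‖WithLp.toLp 2 u‖)⁻¹ • WithLp.toLp 2 u)
    (z : EuclideanSpace ℝ (Fin p)) :
    auxQ u z.ofLp = ∑ i ∈ Finset.univ.erase i₀, (inner ℝ (b i) z) ^ 2 := by
  have hn : ‖WithLp.toLp 2 u‖ ≠ 0 := by simpa using hu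
  have h1 : ∑ i, (inner ℝ (b i) z) ^ 2 = ‖z‖ ^ 2 := b.sum_sq_inner_right z
  rw [← Finset.add_sum_erase _ _ (Finset.mem_univ i₀), hb, real_inner_smul_left] at h1
  have hin : inner ℝ (WithLp.toLp 2 u) z = ∑ j, u j * z j := by
    simp [PiLp.inner_apply, mul_comm]
  have hnu : ∑ j, u j ^ 2 = ‖WithLp.toLp 2 u‖ ^ 2 := by
    rw [EuclideanSpace.real_norm_sq_eq]
  have hQ : auxQ u z.ofLp = ‖z - ((∑ j, u j * z j) / (∑ j, u j ^ 2)) • WithLp.toLp 2 u‖ ^ 2 := by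
    rw [EuclideanSpace.real_norm_sq_eq]; rfl
  rw [hQ, norm_sub_sq_real, real_inner_smul_right, norm_smul, mul_pow, real_inner_comm, hin, hnu,
    Real.norm_eq_abs, sq_abs]
  rw [hin] at h1
  have : ∑ i ∈ Finset.univ.erase i₀, (inner ℝ (b i) z) ^ 2 = ‖z‖ ^ 2 -
    (‖WithLp.toLp 2 u‖⁻¹ * ∑ j, u j * z j) ^ 2 := by linarith
  rw [this]
  field_simp
  ring

lemma aux_meas {p : ℕ} : Measurable (fun q : (Fin p → ℝ) × (Fin p → ℝ) => auxQ q.1 q.2) := by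
  unfold auxQ; fun_prop

lemma aux_meas_right {p : ℕ} (u : Fin p → ℝ) : Measurable (auxQ u) := by
  unfold auxQ; fun_prop

lemma aux_Q_law (p : ℕ) (hp : 2 ≤ p) (u : Fin p → ℝ) (hu : u ≠ 0) :
    (Measure.pi (fun _ : Fin p => gaussianReal 0 1)).map (auxQ u) =
      gammaMeasure (((p : ℝ) - 1) / 2) (1 / 2) := by
  have hn : ‖WithLp.toLp 2 u‖ ≠ 0 := by simpa using hu
  let i₀ : Fin p := ⟨0, by omega⟩
  let w : EuclideanSpace ℝ (Fin p) := (‖WithLp.toLp 2 u‖)⁻¹ • WithLp.toLp 2 u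
  have hw : ‖w‖ = 1 := by simp only [w, norm_smul, norm_inv, norm_norm]; exact inv_mul_cancel₀ hn
  obtain ⟨b, hb⟩ := Orthonormal.exists_orthonormalBasis_extension_of_card_eq (𝕜 := ℝ)
    (E := EuclideanSpace ℝ (Fin p)) (ι := Fin p) (by simp) (v := fun _ => w) (s := {i₀}) (by
      constructor
      · intro i; exact hw
      · intro i j hij; exact absurd (Subsingleton.elim i j) hij)
  have hb := hb i₀ rfl
  have e1 : (Measure.pi (fun _ : Fin p => gaussianReal 0 1)).map (auxQ u)
      = (stdGaussian (EuclideanSpace ℝ (Fin p))).map (fun z => auxQ u z.ofLp) := by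
    rw [← map_pi_eq_stdGaussian, Measure.map_map]
    · rfl
    · exact (aux_meas_right u).comp (by fun_prop)
    · fun_prop
  rw [e1, stdGaussian_eq_map_pi_orthonormalBasis b, Measure.map_map, ← aux_pi p hp i₀]
  · congr 1
    ext x
    simp only [Function.comp]
    rw [aux_Q_law_det p u hu b i₀ hb]
    refine Finset.sum_congr rfl fun i _ => ?_
    rw [inner_sum]
    simp [real_inner_smul_right, b.inner_eq_ite]
  · exact (aux_meas_right u).comp (by fun_prop)
  · fun_prop

lemma aux_shift (p : ℕ) (m : Fin p → ℝ) :
    (Measure.pi fun i => gaussianReal (m i) 1).map (fun x i => x i - m i) =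
      Measure.pi fun _ => gaussianReal 0 1 := by
  rw [Measure.pi_map_pi (f := fun i y => y - m i) (fun i => by fun_prop)]
  simp [gaussianReal_map_sub_const]

lemma aux_main (p : ℕ) (hp : 2 ≤ p) (m : Fin p → ℝ) (t : ℝ) :
    ((Measure.pi fun _ : Fin p => gaussianReal 0 1).prod (Measure.pi fun _ : Fin p =>
      gaussianReal 0 1)) {q | t < auxQ (fun i => q.1 i + m i) q.2} ≤
      gammaMeasure (((p : ℝ) - 1) / 2) (1 / 2) {z | z > t} := by
  have hms : MeasurableSet {q : (Fin p → ℝ) × (Fin p → ℝ) | t < auxQ (fun i => q.1 i + m i) q.2} :=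
    measurableSet_lt measurable_const (aux_meas.comp
      (g := fun q : (Fin p → ℝ) × (Fin p → ℝ) => auxQ q.1 q.2)
      (f := fun q : (Fin p → ℝ) × (Fin p → ℝ) => ((fun i => q.1 i + m i : Fin p → ℝ), q.2))
      (by fun_prop))
  rw [Measure.prod_apply hms]
  have : Nonempty (Fin p) := ⟨⟨0, by omega⟩⟩
  have hprob := isProbabilityMeasure_gammaMeasure (a := ((p : ℝ) - 1) / 2) (r := 1 / 2)
    (by have : (2 : ℝ) ≤ p := by exact_mod_cast hp
        linarith) (by norm_num)
  have hat : ∀ᵐ u ∂(Measure.pi fun _ : Fin p => gaussianReal 0 1), u ≠ -m := by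
    have : NullSingletonClass (gaussianReal 0 (1 : NNReal)) := nullSingletonClass_gaussianReal (v := 1) one_ne_zero
    have : NullSingletonClass (Measure.pi fun _ : Fin p => gaussianReal 0 1) := Measure.pi_nullSingletonClass ⟨0, by omega⟩
    rw [ae_iff]
    simp only [ne_eq, not_not]
    exact measure_singleton (μ := Measure.pi fun _ : Fin p => gaussianReal 0 1) (-m)
  calc _ ≤ ∫⁻ u, gammaMeasure (((p : ℝ) - 1) / 2) (1 / 2) {z | z > t}
        ∂(Measure.pi fun _ : Fin p => gaussianReal 0 1) := by
        refine lintegral_mono_ae ?_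
        filter_upwards [hat] with u hu
        have hu' : (fun i => u i + m i) ≠ 0 := by
          intro h; apply hu; ext i; have := congrFun h i; simp at this ⊢; linarith
        rw [← aux_Q_law p hp _ hu', Measure.map_apply (aux_meas_right _)
          (s := {z | z > t}) (measurableSet_lt measurable_const measurable_id)]
        exact le_of_eq rfl
    _ = _ := by simp

/-- If `X ∼ N(μ₁, I_p)` and `Y ∼ N(βμ₁, I_p)` are independent with `p ≥ 2`, then
`R(β̂) = inf_b (Y - bX)ᵀ(Y - bX)/(1 + b²)` is stochastically dominated by `χ²_{p-1}`. -/
theorem profile_llr_stochastically_dominated_by_chiSq_sub_one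
    {Ω : Type*} [MeasureSpace Ω] [IsProbabilityMeasure (ℙ : Measure Ω)]
    (p : ℕ) (hp : 2 ≤ p) (μ₁ : Fin p → ℝ) (β : ℝ)
    (X Y : Ω → Fin p → ℝ) (hX : Measurable X) (hY : Measurable Y)
    (hXlaw : Measure.map X ℙ = mvGaussianId p μ₁)
    (hYlaw : Measure.map Y ℙ = mvGaussianId p (fun i => β * μ₁ i))
    (hindep : IndepFun X Y ℙ)
    (R : Ω → ℝ)
    (hR : ∀ ω, R ω = ⨅ b : ℝ, (∑ i, (Y ω i - b * X ω i) ^ 2) / (1 + b ^ 2)) :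
    ∀ t : ℝ, 0 ≤ t → ℙ {ω | R ω > t} ≤ chiSquared ((p : ℝ) - 1) {z | z > t} := by
  unfold mvGaussianId at hXlaw hYlaw
  unfold chiSquared
  intro t _
  obtain ⟨s, hs0, hs⟩ : ∃ s : ℝ, s ≠ 0 ∧ s ^ 2 = 1 + β ^ 2 :=
    ⟨√(1 + β ^ 2), by positivity, Real.sq_sqrt (by positivity)⟩
  let G : Ω → Fin p → ℝ := fun ω i => X ω i - μ₁ i
  let H : Ω → Fin p → ℝ := fun ω i => Y ω i - β * μ₁ i
  have hG : Measurable G := by fun_prop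
  have hH : Measurable H := by fun_prop
  have hGl : Measure.map G ℙ = Measure.pi fun _ => gaussianReal 0 1 := by
    rw [← aux_shift p μ₁, ← hXlaw, Measure.map_map (by fun_prop) hX]; rfl
  have hHl : Measure.map H ℙ = Measure.pi fun _ => gaussianReal 0 1 := by
    rw [← aux_shift p (fun i => β * μ₁ i), ← hYlaw, Measure.map_map (by fun_prop) hY]; rfl
  have hGH : IndepFun G H ℙ :=
    hindep.comp (φ := fun (x : Fin p → ℝ) (i : Fin p) => x i - μ₁ i)
      (ψ := fun (x : Fin p → ℝ) (i : Fin p) => x i - β * μ₁ i)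
      (by fun_prop) (by fun_prop)
  have hj : MeasurePreserving (fun ω => (G ω, H ω)) ℙ
      ((Measure.pi fun _ => gaussianReal 0 1).prod (Measure.pi fun _ => gaussianReal 0 1)) := by
    refine ⟨by fun_prop, ?_⟩
    rw [(indepFun_iff_map_prod_eq_prod_map_map hG.aemeasurable hH.aemeasurable).1 hGH, hGl, hHl]
  have hrot := (aux_rot p (1 / s) (β / s) (by field_simp; linarith)).comp hj
  refine le_trans ?_ (aux_main p hp (fun i => s * μ₁ i) t)
  have hms : MeasurableSet {q : (Fin p → ℝ) × (Fin p → ℝ) |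
      t < auxQ (fun i => q.1 i + s * μ₁ i) q.2} :=
    measurableSet_lt measurable_const (aux_meas.comp
      (g := fun q : (Fin p → ℝ) × (Fin p → ℝ) => auxQ q.1 q.2)
      (f := fun q : (Fin p → ℝ) × (Fin p → ℝ) => ((fun i => q.1 i + s * μ₁ i : Fin p → ℝ), q.2))
      (by fun_prop))
  rw [← hrot.measure_preimage hms.nullMeasurableSet]
  refine measure_mono fun ω hω => ?_
  have h1 := aux_R_le p (X ω) (Y ω) (R ω) β s hs (hR ω)
  have hω : t < R ω := hω
  simp only [Set.mem_preimage, Set.mem_ofPred_eq, Function.comp]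
  refine lt_of_lt_of_le hω (h1.trans (le_of_eq ?_))
  congr 1
  · ext i
    simp only [G, H]
    field_simp
    rw [hs]; ring
  · ext i
    simp only [G, H]
    field_simp
    ring
end

section
/- Let p ≥ 2 and let X ∼ N(0, I_p) and Y ∼ N(0, I_p) be independent standard p-dimensional Gaussian vectors, and let λ₂(S) denote the smallest eigenvalue of S = (X Y)ᵀ(X Y). Then λ₂(S) is stochastically dominated by the chi-squared distribution with p − 1 degrees of freedom: for every t ≥ 0, P(λ₂(S) > t) ≤ P(Z > t) where Z ∼ χ²_{p−1}. -/
open MeasureTheory ProbabilityTheory Matrix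

/-- The `p × 2` matrix whose columns are `X` and `Y`. -/
noncomputable def colMatrix (p : ℕ) (X Y : Fin p → ℝ) : Matrix (Fin p) (Fin 2) ℝ :=
  Matrix.of fun i j => ![X i, Y i] j


lemma aux_mgf_gamma_s6 {a : ℝ} (ha : 0 < a) (s : ℝ) :
    mgf id (gammaMeasure a (1/2)) s = if s < 1/2 then ((1/2) / (1/2 - s)) ^ a else 0 := by
  have h1 : mgf id (gammaMeasure a (1/2)) s =
      ∫ x in Set.Ioi (0:ℝ), ((1/2) ^ a / Real.Gamma a) * (x ^ (a - 1) * Real.exp (-((1/2 - s) * x))) := by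
    unfold mgf gammaMeasure
    rw [integral_withDensity_eq_integral_toReal_smul
      (by unfold gammaPDF; fun_prop) (by simp [gammaPDF])]
    rw [← integral_Ici_eq_integral_Ioi, ← integral_indicator measurableSet_Ici]
    congr 1
    ext x
    by_cases hx : 0 ≤ x
    · have := gammaPDFReal_nonneg ha (by norm_num : (0:ℝ) < 1/2) x
      rw [gammaPDF, ENNReal.toReal_ofReal this, gammaPDFReal, if_pos hx,
        Set.indicator_of_mem (by simpa using hx), smul_eq_mul]
      have : Real.exp (-((1/2 - s) * x)) = Real.exp (-(1/2*x)) * Real.exp (s * x) := by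
        rw [← Real.exp_add]; congr 1; ring
      rw [this]
      simp only [id]
      ring
    · rw [gammaPDF_of_neg (not_le.mp hx), Set.indicator_of_notMem (by simpa using hx)]
      simp
  rw [h1, integral_const_mul]
  have hG := Real.Gamma_pos_of_pos ha
  split_ifs with hs
  · have hs' : 0 < 1/2 - s := by linarith
    rw [Real.integral_rpow_mul_exp_neg_mul_Ioi ha hs', Real.div_rpow (by norm_num) hs'.le,
      Real.div_rpow (by norm_num) hs'.le, Real.one_rpow]
    field_simp
  · rw [integral_undef, mul_zero]
    intro h
    refine not_integrableOn_Ioi_rpow (a - 1) (Integrable.mono h ?_ ?_)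
    · exact (Measurable.aestronglyMeasurable (by fun_prop))
    · refine (ae_restrict_iff' measurableSet_Ioi).mpr (ae_of_all _ fun x hx => ?_)
      have hx' : (0:ℝ) < x := hx
      have hp := Real.rpow_pos_of_pos hx' (a-1)
      rw [Real.norm_of_nonneg hp.le, Real.norm_of_nonneg (by positivity)]
      have : 1 ≤ Real.exp (-((1/2 - s) * x)) := by
        apply Real.one_le_exp
        nlinarith
      nlinarith

lemma aux_mgf_gauss_sq (s : ℝ) :
    mgf (fun x => x ^ 2) (gaussianReal 0 1) s =
      if s < 1/2 then ((1/2) / (1/2 - s)) ^ (1/2 : ℝ) else 0 := by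
  have h1 : mgf (fun x => x ^ 2) (gaussianReal 0 1) s =
      (√(2 * Real.pi))⁻¹ * √(Real.pi / (1/2 - s)) := by
    unfold mgf
    rw [integral_gaussianReal_eq_integral_smul one_ne_zero, ← integral_gaussian,
      ← integral_const_mul]
    congr 1
    ext x
    simp only [gaussianPDFReal, smul_eq_mul, NNReal.coe_one, mul_one, sub_zero]
    rw [mul_assoc, ← Real.exp_add]
    congr 2
    ring
  rw [h1]
  split_ifs with hs
  · have hs' : 0 < 1/2 - s := by linarith
    rw [← Real.sqrt_eq_rpow, ← Real.sqrt_inv, ← Real.sqrt_mul (by positivity)]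
    congr 1
    have := Real.pi_pos
    field_simp
  · have h0 : Real.pi / (1/2 - s) ≤ 0 :=
      div_nonpos_of_nonneg_of_nonpos Real.pi_pos.le (by linarith)
    rw [Real.sqrt_eq_zero_of_nonpos h0, mul_zero]

lemma aux_chi (n : ℕ) (hn : 0 < n) :
    (Measure.pi fun _ : Fin n => gaussianReal 0 1).map (fun x => ∑ i, (x i) ^ 2) =
      gammaMeasure ((n:ℝ) / 2) (1/2) := by
  have hn' : (0:ℝ) < (n:ℝ) / 2 := by positivity
  have : IsProbabilityMeasure (gammaMeasure ((n:ℝ) / 2) (1/2)) :=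
    isProbabilityMeasure_gammaMeasure hn' (by norm_num)
  have hm : Measurable (fun x : Fin n → ℝ => ∑ i, (x i) ^ 2) := by fun_prop
  have : IsProbabilityMeasure ((Measure.pi fun _ : Fin n => gaussianReal 0 1).map
      (fun x => ∑ i, (x i) ^ 2)) := Measure.isProbabilityMeasure_map hm.aemeasurable
  have hmgf : mgf id (gammaMeasure ((n:ℝ) / 2) (1/2)) =
      mgf id ((Measure.pi fun _ : Fin n => gaussianReal 0 1).map (fun x => ∑ i, (x i) ^ 2)) := by
    ext s
    rw [mgf_id_map hm.aemeasurable, aux_mgf_gamma_s6 hn']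
    have : mgf (fun x : Fin n → ℝ => ∑ i, (x i) ^ 2) (Measure.pi fun _ : Fin n => gaussianReal 0 1) s
        = ∏ i : Fin n, mgf (fun x => x ^ 2) (gaussianReal 0 1) s := by
      unfold mgf
      rw [← integral_fintype_prod_eq_prod (fun (_ : Fin n) (x:ℝ) => Real.exp (s * x ^ 2))]
      congr 1
      ext x
      simp only [← Real.exp_sum, Finset.mul_sum]
    rw [this, aux_mgf_gauss_sq, Finset.prod_const, Finset.card_univ, Fintype.card_fin]
    split_ifs with hs
    · have hs' : 0 < 1/2 - s := by linarith
      rw [← Real.rpow_natCast, ← Real.rpow_mul (by positivity)]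
      congr 1; ring
    · rw [zero_pow hn.ne']
  have hI : (0:ℝ) ∈ interior (integrableExpSet id (gammaMeasure ((n:ℝ) / 2) (1/2))) := by
    rw [mem_interior]
    refine ⟨Set.Iio (1/2), fun s hs => ?_, isOpen_Iio, by norm_num⟩
    have hs' : s < 1/2 := hs
    show Integrable _ _
    rw [← mgf_pos_iff, aux_mgf_gamma_s6 hn', if_pos hs']
    have hs' : 0 < 1/2 - s := by linarith
    positivity
  symm
  apply Measure.ext_of_charFun
  ext t
  rw [← complexMGF_id_mul_I, ← complexMGF_id_mul_I]
  apply eqOn_complexMGF_of_mgf hmgf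
  simpa using hI

lemma aux_chi_std {E : Type*} [NormedAddCommGroup E] [InnerProductSpace ℝ E]
    [FiniteDimensional ℝ E] [MeasurableSpace E] [BorelSpace E]
    (hn : 0 < Module.finrank ℝ E) :
    (stdGaussian E).map (fun x => ‖x‖ ^ 2) = gammaMeasure ((Module.finrank ℝ E : ℝ) / 2) (1/2) := by
  rw [← aux_chi _ hn, stdGaussian_eq_map_pi_orthonormalBasis (stdOrthonormalBasis ℝ E),
    Measure.map_map (by fun_prop) (by fun_prop)]
  congr 1
  ext x
  have := (stdOrthonormalBasis ℝ E).orthonormal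
  simp only [Function.comp]
  rw [← real_inner_self_eq_norm_sq, this.inner_sum]
  simp [pow_two]

lemma aux_proj {E : Type*} [NormedAddCommGroup E] [InnerProductSpace ℝ E]
    [FiniteDimensional ℝ E] [MeasurableSpace E] [BorelSpace E] (W : Submodule ℝ E) :
    (stdGaussian E).map W.orthogonalProjectionOnto = stdGaussian W := by
  apply Measure.ext_of_charFun
  ext t
  rw [charFun_stdGaussian, charFun_apply, integral_map (by fun_prop) (by fun_prop)]
  have := charFun_stdGaussian (t : E)
  rw [charFun_apply] at this
  simpa using this

lemma aux_fiber (p : ℕ) (hp : 2 ≤ p) (t : ℝ) (x : Fin p → ℝ) :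
    mvGaussianId p 0 {y | 0 < x ⬝ᵥ x ∧ t * (x ⬝ᵥ x) + (x ⬝ᵥ y) ^ 2 < (y ⬝ᵥ y) * (x ⬝ᵥ x)} ≤
      chiSquared ((p : ℝ) - 1) {z | z > t} := by
  by_cases hx : 0 < x ⬝ᵥ x
  swap
  · simp [hx]
  let x' : EuclideanSpace ℝ (Fin p) := WithLp.toLp 2 x
  have hx' : x' ≠ 0 := by
    intro h
    have : x = 0 := by simpa [x'] using h
    simp [this] at hx
  obtain ⟨n, rfl⟩ : ∃ n, p = n + 1 := ⟨p - 1, by omega⟩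
  have : Fact (Module.finrank ℝ (EuclideanSpace ℝ (Fin (n+1))) = n + 1) := ⟨by simp⟩
  have hfr : Module.finrank ℝ (ℝ ∙ x')ᗮ = n := Submodule.finrank_orthogonal_span_singleton hx'
  have key := aux_chi_std (E := (ℝ ∙ x')ᗮ) (by omega)
  rw [← aux_proj, ← map_pi_eq_stdGaussian, Measure.map_map (by fun_prop) (by fun_prop),
    Measure.map_map (by fun_prop) (by fun_prop), hfr] at key
  have e : ((n + 1 : ℕ) : ℝ) - 1 = n := by push_cast; ring
  rw [chiSquared, e, ← key, show {z : ℝ | z > t} = Set.Ioi t from rfl,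
    Measure.map_apply (by fun_prop) measurableSet_Ioi]
  unfold mvGaussianId
  apply measure_mono
  rintro y ⟨-, hy⟩
  simp only [Set.mem_preimage, Function.comp]
  have h1 := Submodule.norm_sq_eq_add_norm_sq_projection (WithLp.toLp 2 y : EuclideanSpace ℝ (Fin (n+1))) (ℝ ∙ x')
  have h2 : ‖(ℝ ∙ x').orthogonalProjectionOnto (WithLp.toLp 2 y)‖ =
    ‖(ℝ ∙ x').starProjection (WithLp.toLp 2 y)‖ := rfl
  have ex : ‖x'‖ ^ 2 = x ⬝ᵥ x := by
    rw [EuclideanSpace.real_norm_sq_eq]; simp [x', dotProduct, pow_two]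
  have ey : ‖(WithLp.toLp 2 y : EuclideanSpace ℝ (Fin (n+1)))‖ ^ 2 = y ⬝ᵥ y := by
    rw [EuclideanSpace.real_norm_sq_eq]; simp [dotProduct, pow_two]
  have exy : inner ℝ x' (WithLp.toLp 2 y) = x ⬝ᵥ y := by
    simp [x', PiLp.inner_apply, dotProduct, mul_comm]
  rw [h2, Submodule.starProjection_singleton, norm_smul, mul_pow, ey, ex, exy] at h1
  simp only [Real.norm_eq_abs, sq_abs, RCLike.ofReal_real_eq_id, id] at h1
  have h3 : (x ⬝ᵥ y / (x ⬝ᵥ x)) ^ 2 * (x ⬝ᵥ x) = (x ⬝ᵥ y) ^ 2 / (x ⬝ᵥ x) := by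
    field_simp
  rw [h3] at h1
  have h4 : t + (x ⬝ᵥ y) ^ 2 / (x ⬝ᵥ x) < y ⬝ᵥ y := by
    rw [← sub_pos] at hy ⊢
    have : y ⬝ᵥ y - (t + (x ⬝ᵥ y) ^ 2 / (x ⬝ᵥ x)) =
      ((y ⬝ᵥ y) * (x ⬝ᵥ x) - (t * (x ⬝ᵥ x) + (x ⬝ᵥ y) ^ 2)) / (x ⬝ᵥ x) := by
      field_simp
    rw [this]
    positivity
  show t < _
  linarith

lemma aux_eig (p : ℕ) (x y : Fin p → ℝ)
    (hS : ((colMatrix p x y)ᵀ * colMatrix p x y).IsHermitian) (t : ℝ) (ht : 0 ≤ t)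
    (h : (⨅ j, hS.eigenvalues j) > t) :
    0 < x ⬝ᵥ x ∧ t * (x ⬝ᵥ x) + (x ⬝ᵥ y) ^ 2 < (y ⬝ᵥ y) * (x ⬝ᵥ x) := by
  have hb : ∀ j, t < hS.eigenvalues j := fun j =>
    lt_of_lt_of_le h (ciInf_le (Set.finite_range _).bddBelow j)
  have h0 := hb 0
  have h1 := hb 1
  have hd := hS.det_eq_prod_eigenvalues
  have htr := hS.trace_eq_sum_eigenvalues
  have hxy : y ⬝ᵥ x = x ⬝ᵥ y := dotProduct_comm _ _
  have e00 : ((colMatrix p x y)ᵀ * colMatrix p x y) 0 0 = x ⬝ᵥ x := by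
    simp [Matrix.mul_apply, colMatrix, dotProduct]
  have e01 : ((colMatrix p x y)ᵀ * colMatrix p x y) 0 1 = x ⬝ᵥ y := by
    simp [Matrix.mul_apply, colMatrix, dotProduct]
  have e10 : ((colMatrix p x y)ᵀ * colMatrix p x y) 1 0 = x ⬝ᵥ y := by
    rw [← hxy]; simp [Matrix.mul_apply, colMatrix, dotProduct]
  have e11 : ((colMatrix p x y)ᵀ * colMatrix p x y) 1 1 = y ⬝ᵥ y := by
    simp [Matrix.mul_apply, colMatrix, dotProduct]
  rw [Matrix.det_fin_two, e00, e01, e10, e11, Fin.prod_univ_two] at hd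
  rw [Matrix.trace_fin_two, e00, e11, Fin.sum_univ_two] at htr
  simp only [RCLike.ofReal_real_eq_id, id] at hd htr
  generalize hS.eigenvalues 0 = l at *
  generalize hS.eigenvalues 1 = m at *
  generalize x ⬝ᵥ x = a at *
  generalize y ⬝ᵥ y = c at *
  generalize x ⬝ᵥ y = b at *
  have k1 : 0 < (l - t) * (m - t) := mul_pos (by linarith) (by linarith)
  have k2 : b ^ 2 < (a - t) * (c - t) := by nlinarith
  have k3 : t < a := by
    by_contra hc
    have : t < c := by linarith
    nlinarith [sq_nonneg b, mul_nonneg (sub_nonneg.2 (not_lt.1 hc)) (sub_nonneg.2 this.le)]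
  have k4 : t < c := by nlinarith [sq_nonneg b]
  refine ⟨by linarith, ?_⟩
  nlinarith [mul_nonneg ht (sub_nonneg.2 k4.le)]

/-- If `X ∼ N(0, I_p)` and `Y ∼ N(0, I_p)` are independent with `p ≥ 2`, then the smallest
eigenvalue of `S = (X Y)ᵀ (X Y)` is stochastically dominated by `χ²_{p-1}`. -/
theorem smallest_eigenvalue_stochastically_dominated_central
    {Ω : Type*} [MeasureSpace Ω] [IsProbabilityMeasure (ℙ : Measure Ω)]
    (p : ℕ) (hp : 2 ≤ p)
    (X Y : Ω → Fin p → ℝ) (hX : Measurable X) (hY : Measurable Y)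
    (hXlaw : Measure.map X ℙ = mvGaussianId p 0)
    (hYlaw : Measure.map Y ℙ = mvGaussianId p 0)
    (hindep : IndepFun X Y ℙ)
    (hS : ∀ ω, ((colMatrix p (X ω) (Y ω))ᵀ * colMatrix p (X ω) (Y ω)).IsHermitian) :
    ∀ t : ℝ, 0 ≤ t →
      ℙ {ω | (⨅ j, (hS ω).eigenvalues j) > t} ≤ chiSquared ((p : ℝ) - 1) {z | z > t} := by
  intro t ht
  let A : Set ((Fin p → ℝ) × (Fin p → ℝ)) := {q | 0 < q.1 ⬝ᵥ q.1 ∧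
    t * (q.1 ⬝ᵥ q.1) + (q.1 ⬝ᵥ q.2) ^ 2 < (q.2 ⬝ᵥ q.2) * (q.1 ⬝ᵥ q.1)}
  have hA : MeasurableSet A := by
    simp only [A, dotProduct]
    rw [Set.setOf_and]
    refine MeasurableSet.inter (measurableSet_lt ?_ ?_) (measurableSet_lt ?_ ?_) <;> fun_prop
  have : IsProbabilityMeasure (mvGaussianId p 0) := by unfold mvGaussianId; infer_instance
  calc ℙ {ω | (⨅ j, (hS ω).eigenvalues j) > t}
      ≤ ℙ ((fun ω => (X ω, Y ω)) ⁻¹' A) :=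
        measure_mono fun ω hω => aux_eig p _ _ (hS ω) t ht hω
    _ = ((mvGaussianId p 0).prod (mvGaussianId p 0)) A := by
        rw [← Measure.map_apply (hX.prodMk hY) hA,
          (indepFun_iff_map_prod_eq_prod_map_map hX.aemeasurable hY.aemeasurable).1 hindep,
          hXlaw, hYlaw]
    _ = ∫⁻ x, mvGaussianId p 0 (Prod.mk x ⁻¹' A) ∂(mvGaussianId p 0) := Measure.prod_apply hA
    _ ≤ ∫⁻ x, chiSquared ((p : ℝ) - 1) {z | z > t} ∂(mvGaussianId p 0) :=
        lintegral_mono fun x => aux_fiber p hp t x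
    _ = chiSquared ((p : ℝ) - 1) {z | z > t} := by simp
end

section
/- For every integer j ≥ 1 and every real x > 1, the Legendre polynomials satisfy j·P_{j−1}(x) ≤ (j+1)·(x − √(x² − 1))·P_j(x). Equivalently, since P_j(x) > 0 for x > 1, P_{j−1}(x)/P_j(x) ≤ ((j+1)/j)·(x − √(x² − 1)). -/
/-- The Legendre polynomials, as real functions: `P₀(x) = 1`, `P₁(x) = x`, and Bonnet's
recursion `(j+1) P_{j+1}(x) = (2j+1) x P_j(x) - j P_{j-1}(x)` for `j ≥ 1`. -/
noncomputable def legendreP : ℕ → ℝ → ℝ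
  | 0, _ => 1
  | 1, x => x
  | n + 2, x =>
      ((2 * (n : ℝ) + 3) * x * legendreP (n + 1) x - ((n : ℝ) + 1) * legendreP n x) /
        ((n : ℝ) + 2)

lemma legendre_aux (x t : ℝ) (hx : 1 < x) (ht : 0 < t) (hxt : 2 * t * x = t ^ 2 + 1) (n : ℕ) :
    0 < legendreP (n + 1) x ∧ legendreP n x ≤ legendreP (n + 1) x ∧
      ((n : ℝ) + 1) * legendreP n x ≤ ((n : ℝ) + 2) * t * legendreP (n + 1) x := by
  induction n with
  | zero =>
    simp only [legendreP]
    refine ⟨by linarith, hx.le, ?_⟩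
    push_cast
    nlinarith [sq_nonneg t]
  | succ n ih =>
    obtain ⟨hb, hab, hk⟩ := ih
    have hn : (0 : ℝ) ≤ n := Nat.cast_nonneg n
    have hc : ((n : ℝ) + 2) * legendreP (n + 2) x =
        (2 * (n : ℝ) + 3) * x * legendreP (n + 1) x - ((n : ℝ) + 1) * legendreP n x := by
      rw [legendreP]
      field_simp
    rw [show n + 1 + 1 = n + 2 from rfl]
    generalize legendreP (n + 2) x = c at *
    generalize legendreP (n + 1) x = b at *
    generalize legendreP n x = a at *
    push_cast
    generalize (n : ℝ) = m at *
    have hbc : b ≤ c := by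
      have h1 : (2 * m + 3) * b ≤ (2 * m + 3) * x * b := by
        have : 0 ≤ (2 * m + 3) * (x - 1) * b := by
          have : 0 ≤ x - 1 := by linarith
          positivity
        nlinarith
      have h2 : (m + 1) * a ≤ (m + 1) * b := by gcongr
      have h3 : (m + 2) * b ≤ (m + 2) * c := by linarith
      exact le_of_mul_le_mul_left h3 (by linarith)
    refine ⟨by linarith, hbc, ?_⟩
    have hmain : (m + 2) * ((m + 2) * b) ≤ (m + 2) * ((m + 3) * t * c) := by
      have e : 2 * ((m + 2) * ((m + 3) * t * c)) =
          (m + 3) * ((2 * m + 3) * (t ^ 2 + 1) * b - 2 * t * ((m + 1) * a)) := by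
        rw [← hxt]
        linear_combination 2 * (m + 3) * t * hc
      rcases le_total ((m + 3) * t ^ 2) (m + 1) with h | h
      · have h1 : (m + 3) * (2 * t) * ((m + 1) * a) ≤ (m + 3) * (2 * t) * ((m + 2) * t * b) := by
          gcongr
        have h2 : 0 ≤ (m + 1 - (m + 3) * t ^ 2) * b := mul_nonneg (by linarith) hb.le
        nlinarith
      · have h1 : (m + 3) * (2 * t) * ((m + 1) * a) ≤ (m + 3) * (2 * t) * ((m + 1) * b) := by
          gcongr
        have h2 : 0 ≤ (m + 2) * ((m + 3) * t ^ 2 - (m + 1)) * b :=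
          mul_nonneg (mul_nonneg (by linarith) (by linarith)) hb.le
        have h3 : 0 ≤ (m + 1) * (m + 3) * (1 - t) ^ 2 * b := by positivity
        nlinarith
    have := le_of_mul_le_mul_left hmain (by linarith)
    linarith

/-- For `j ≥ 1` and `x > 1`, `j P_{j-1}(x) ≤ (j+1)(x - √(x²-1)) P_j(x)`; equivalently, since
`P_j(x) > 0`, `P_{j-1}(x)/P_j(x) ≤ ((j+1)/j)(x - √(x²-1))`. -/
theorem legendre_key_inequality (j : ℕ) (hj : 1 ≤ j) (x : ℝ) (hx : 1 < x) :
    (j : ℝ) * legendreP (j - 1) x ≤ ((j : ℝ) + 1) * (x - Real.sqrt (x ^ 2 - 1)) * legendreP j x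
    ∧ (0 < legendreP j x ∧
        legendreP (j - 1) x / legendreP j x
          ≤ ((j : ℝ) + 1) / (j : ℝ) * (x - Real.sqrt (x ^ 2 - 1))) := by
  obtain ⟨n, rfl⟩ : ∃ n, j = n + 1 := ⟨j - 1, by omega⟩
  have hs : Real.sqrt (x ^ 2 - 1) ^ 2 = x ^ 2 - 1 := Real.sq_sqrt (by nlinarith)
  have ht : 0 < x - Real.sqrt (x ^ 2 - 1) := by
    have : Real.sqrt (x ^ 2 - 1) < x := by
      rw [Real.sqrt_lt' (by linarith)]
      linarith
    linarith
  obtain ⟨h1, -, h3⟩ := legendre_aux x _ hx ht (by nlinarith) n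
  have hk : ((n + 1 : ℕ) : ℝ) * legendreP (n + 1 - 1) x ≤
      (((n + 1 : ℕ) : ℝ) + 1) * (x - Real.sqrt (x ^ 2 - 1)) * legendreP (n + 1) x := by
    rw [Nat.add_sub_cancel]
    push_cast
    linarith
  refine ⟨hk, h1, ?_⟩
  have hp : (0 : ℝ) < ((n + 1 : ℕ) : ℝ) := by positivity
  rw [div_mul_eq_mul_div, div_le_div_iff₀ h1 hp]
  linarith
end

section
/- Fix an integer j ≥ 1 and a real x ≥ (j+1)/√(j(j+2)) with x > 1. If j·P_{j−1}(x) ≤ (j+1)·(x − √(x² − 1))·P_j(x), then (j+1)·P_j(x) ≤ (j+2)·(x − √(x² − 1))·P_{j+1}(x). (This is the induction step of the key Legendre inequality in the regime x ≥ (j+1)/√(j(j+2)).) -/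
theorem legendreP_pos_mono (x : ℝ) (hx : 1 < x) (n : ℕ) :
    0 < legendreP n x ∧ legendreP n x ≤ legendreP (n + 1) x := by
  induction n with
  | zero => simp [legendreP]; exact hx.le
  | succ n ih =>
    obtain ⟨h0, h1⟩ := ih
    have hp : 0 < legendreP (n + 1) x := lt_of_lt_of_le h0 h1
    refine ⟨hp, ?_⟩
    have hn : (0 : ℝ) ≤ n := Nat.cast_nonneg n
    rw [show legendreP (n + 1 + 1) x = ((2 * (n : ℝ) + 3) * x * legendreP (n + 1) x
      - ((n : ℝ) + 1) * legendreP n x) / ((n : ℝ) + 2) from rfl, le_div_iff₀ (by positivity)]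
    have h2 : 0 ≤ (2 * (n : ℝ) + 3) * ((x - 1) * legendreP (n + 1) x) :=
      mul_nonneg (by positivity) (mul_nonneg (by linarith) hp.le)
    have h3 : 0 ≤ ((n : ℝ) + 1) * (legendreP (n + 1) x - legendreP n x) :=
      mul_nonneg (by positivity) (by linarith)
    nlinarith

/-- Induction step of the key Legendre inequality in the regime `x ≥ (j+1)/√(j(j+2))`:
if `j P_{j-1}(x) ≤ (j+1)(x - √(x²-1)) P_j(x)`, then
`(j+1) P_j(x) ≤ (j+2)(x - √(x²-1)) P_{j+1}(x)`. -/
theorem legendre_key_inequality_induction_step (j : ℕ) (hj : 1 ≤ j) (x : ℝ) (hx1 : 1 < x)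
    (hx2 : ((j : ℝ) + 1) / Real.sqrt ((j : ℝ) * ((j : ℝ) + 2)) ≤ x)
    (hind : (j : ℝ) * legendreP (j - 1) x
        ≤ ((j : ℝ) + 1) * (x - Real.sqrt (x ^ 2 - 1)) * legendreP j x) :
    ((j : ℝ) + 1) * legendreP j x
      ≤ ((j : ℝ) + 2) * (x - Real.sqrt (x ^ 2 - 1)) * legendreP (j + 1) x := by
  obtain ⟨m, rfl⟩ : ∃ m, j = m + 1 := ⟨j - 1, by omega⟩
  have hp := (legendreP_pos_mono x hx1 (m + 1)).1
  have hrec : ((m : ℝ) + 2) * legendreP (m + 1 + 1) x = (2 * (m : ℝ) + 3) * x * legendreP (m + 1) x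
      - ((m : ℝ) + 1) * legendreP m x := by
    rw [show legendreP (m + 1 + 1) x = ((2 * (m : ℝ) + 3) * x * legendreP (m + 1) x
      - ((m : ℝ) + 1) * legendreP m x) / ((m : ℝ) + 2) from rfl]
    have : (m : ℝ) + 2 ≠ 0 := by positivity
    field_simp
  rw [Nat.add_sub_cancel] at hind
  push_cast at *
  generalize legendreP (m + 1 + 1) x = R at *
  generalize legendreP (m + 1) x = Q at *
  generalize legendreP m x = P at *
  have hm : (0 : ℝ) ≤ m := Nat.cast_nonneg m
  generalize (m : ℝ) = k at *
  have hs0 : 0 ≤ Real.sqrt (x ^ 2 - 1) := Real.sqrt_nonneg _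
  have hs2 : Real.sqrt (x ^ 2 - 1) ^ 2 = x ^ 2 - 1 := Real.sq_sqrt (by nlinarith)
  have hw : (k + 2) ^ 2 ≤ x ^ 2 * ((k + 1) * (k + 3)) := by
    have hpos : 0 < (k + 1) * (k + 1 + 2) := by positivity
    rw [div_le_iff₀ (Real.sqrt_pos.2 hpos)] at hx2
    have h := pow_le_pow_left₀ (by positivity) hx2 2
    rw [mul_pow, Real.sq_sqrt hpos.le] at h
    nlinarith
  generalize Real.sqrt (x ^ 2 - 1) = s at *
  obtain ⟨u, hu⟩ : ∃ u, u = x - s := ⟨_, rfl⟩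
  rw [← hu] at hind ⊢
  have hux : 2 * u * x = u ^ 2 + 1 := by rw [hu]; nlinarith
  have hu0 : 0 < u := by
    by_contra h
    nlinarith
  have hu1 : u < 1 := by
    by_contra h
    have hxs : 1 + s ≤ x := by linarith
    have hs : 0 < s := by
      rcases hs0.lt_or_eq with h0 | h0
      · exact h0
      · rw [← h0] at hs2
        nlinarith
    nlinarith
  have hv1 : u ^ 2 < 1 := by nlinarith
  have hfac : 0 ≤ (u ^ 2 * (k + 3) - (k + 1)) * (u ^ 2 * (k + 1) - (k + 3)) := by
    have h1 : 4 * u ^ 2 * (k + 2) ^ 2 ≤ (u ^ 2 + 1) ^ 2 * ((k + 1) * (k + 3)) := by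
      have := mul_le_mul_of_nonneg_left hw (show 0 ≤ 4 * u ^ 2 by positivity)
      rw [← hux]
      nlinarith
    nlinarith
  have hkey : u ^ 2 * (k + 3) ≤ k + 1 := by
    by_contra h
    have h2 : u ^ 2 * (k + 1) - (k + 3) < 0 := by nlinarith
    nlinarith [mul_neg_of_pos_of_neg (show 0 < u ^ 2 * (k + 3) - (k + 1) by linarith) h2]
  have hR : ((2 * k + 3) * x - (k + 2) * u) * Q ≤ (k + 2) * R := by
    rw [hrec]; nlinarith
  have hc : (k + 2) ^ 2 ≤ (k + 3) * u * ((2 * k + 3) * x - (k + 2) * u) := by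
    have : (k + 3) * u * ((2 * k + 3) * x - (k + 2) * u)
      = (k + 3) * ((2 * k + 3) * (u ^ 2 + 1) / 2 - (k + 2) * u ^ 2) := by
      rw [← hux]; ring
    rw [this]; nlinarith
  have h1 := mul_le_mul_of_nonneg_left hR (show 0 ≤ (k + 3) * u by positivity)
  have h2 := mul_le_mul_of_nonneg_right hc hp.le
  have h3 : (k + 2) * ((k + 2) * Q) ≤ (k + 2) * ((k + 3) * u * R) := by linarith
  have h4 := le_of_mul_le_mul_left h3 (by positivity)
  linarith
end

section
/- For every integer j ≥ 1 and every real x with 1 < x < (j+1)/√(j(j+2)), the Legendre polynomials satisfy (j+1)·P_j(x) ≤ (j+2)·(x − √(x² − 1))·P_{j+1}(x). -/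
theorem legendreP_aux (x : ℝ) (hx : 1 < x) (n : ℕ) :
    0 < legendreP n x ∧ x * legendreP n x ≤ legendreP (n + 1) x := by
  induction n with
  | zero => simp [legendreP]
  | succ n ih =>
    obtain ⟨h0, h1⟩ := ih
    have hn : (0 : ℝ) ≤ n := Nat.cast_nonneg n
    have h2 : legendreP n x ≤ x * legendreP n x := by nlinarith
    have h3 : 0 < legendreP (n + 1) x := by linarith
    refine ⟨h3, ?_⟩
    have h4 : legendreP (n + 1 + 1) x = ((2 * (n : ℝ) + 3) * x * legendreP (n + 1) x
        - ((n : ℝ) + 1) * legendreP n x) / ((n : ℝ) + 2) := by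
      rw [legendreP]
    rw [h4, le_div_iff₀ (by linarith)]
    have h5 : legendreP n x ≤ x * legendreP (n + 1) x := by nlinarith
    nlinarith [mul_le_mul_of_nonneg_left h5 (by linarith : (0 : ℝ) ≤ (n : ℝ) + 1)]

/-- For `j ≥ 1` and `1 < x < (j+1)/√(j(j+2))`,
`(j+1) P_j(x) ≤ (j+2)(x - √(x²-1)) P_{j+1}(x)`. -/
theorem legendre_key_inequality_small_x (j : ℕ) (hj : 1 ≤ j) (x : ℝ) (hx1 : 1 < x)
    (hx2 : x < ((j : ℝ) + 1) / Real.sqrt ((j : ℝ) * ((j : ℝ) + 2))) :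
    ((j : ℝ) + 1) * legendreP j x
      ≤ ((j : ℝ) + 2) * (x - Real.sqrt (x ^ 2 - 1)) * legendreP (j + 1) x := by
  obtain ⟨h0, h1⟩ := legendreP_aux x hx1 j
  have hj' : (1 : ℝ) ≤ j := by exact_mod_cast hj
  have hq : 0 < (j : ℝ) * ((j : ℝ) + 2) := by positivity
  have hr := Real.sqrt_pos.mpr hq
  rw [lt_div_iff₀ hr] at hx2
  have hx3 : x ^ 2 * ((j : ℝ) * ((j : ℝ) + 2)) ≤ ((j : ℝ) + 1) ^ 2 := by
    have := pow_le_pow_left₀ (by positivity) hx2.le 2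
    rwa [mul_pow, Real.sq_sqrt hq.le] at this
  have hs0 := Real.sqrt_nonneg (x ^ 2 - 1)
  have hs : Real.sqrt (x ^ 2 - 1) ^ 2 = x ^ 2 - 1 := Real.sq_sqrt (by nlinarith)
  generalize Real.sqrt (x ^ 2 - 1) = s at *
  have hxs : s < x := by
    apply lt_of_pow_lt_pow_left₀ 2 (by linarith)
    linarith
  have hjs : ((j : ℝ) + 1) * s ≤ x := by
    apply le_of_pow_le_pow_left₀ two_ne_zero (by linarith)
    rw [mul_pow, hs]
    nlinarith
  have key : (j : ℝ) + 1 ≤ ((j : ℝ) + 2) * (x - s) * x := by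
    have := mul_nonneg (sub_nonneg.mpr hxs.le) (sub_nonneg.mpr hjs)
    nlinarith
  calc ((j : ℝ) + 1) * legendreP j x
      ≤ (((j : ℝ) + 2) * (x - s) * x) * legendreP j x :=
        mul_le_mul_of_nonneg_right key h0.le
    _ = (((j : ℝ) + 2) * (x - s)) * (x * legendreP j x) := by ring
    _ ≤ _ := mul_le_mul_of_nonneg_left h1
        (mul_nonneg (by linarith) (sub_nonneg.mpr hxs.le))
end

section
/- For every integer j ≥ 1 and all reals λ₁ > λ₂ > 0, writing x = (λ₁ + λ₂)/(2√(λ₁λ₂)) (so that x > 1), the following inequality holds: (λ₁·(j/2) − λ₂·(j/2 + 1))·P_j(x) ≤ ((λ₁ − λ₂)²/(4√(λ₁λ₂)))·P_j′(x), where P_j′ is the derivative of the j-th Legendre polynomial. Consequently, for each fixed λ₁ > 0 and j ≥ 1, the function λ₂ ↦ (λ₁ − λ₂)·λ₂^{j/2}·P_j((λ₁ + λ₂)/(2√(λ₁λ₂))) is nonincreasing on (0, λ₁). -/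
/-- Recursive form of the derivative of the Legendre polynomials. -/
noncomputable def legendreD : ℕ → ℝ → ℝ
  | 0, _ => 0
  | n + 1, x => x * legendreD n x + ((n : ℝ) + 1) * legendreP n x

lemma legendreP_succ_rel (n : ℕ) (x : ℝ) :
    ((n : ℝ) + 1) * legendreP (n + 1) x
      = (x ^ 2 - 1) * legendreD n x + ((n : ℝ) + 1) * x * legendreP n x := by
  induction n with
  | zero => simp [legendreP, legendreD]
  | succ n ih =>
    have h2 : ((n : ℝ) + 2) * legendreP (n + 2) x =
        (2 * (n : ℝ) + 3) * x * legendreP (n + 1) x - ((n : ℝ) + 1) * legendreP n x := by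
      have : ((n : ℝ) + 2) ≠ 0 := by positivity
      rw [legendreP]
      field_simp
    have h3 : legendreD (n + 1) x = x * legendreD n x + ((n : ℝ) + 1) * legendreP n x := by
      rw [legendreD]
    rw [h3]
    push_cast
    linear_combination h2 + x * ih

lemma legendreP_hasDerivAt (n : ℕ) (x : ℝ) :
    HasDerivAt (legendreP n) (legendreD n x) x ∧
      HasDerivAt (legendreP (n + 1)) (legendreD (n + 1) x) x := by
  induction n with
  | zero =>
    constructor
    · have : legendreP 0 = fun _ => (1 : ℝ) := by funext y; simp [legendreP]
      rw [this]
      simpa [legendreD] using hasDerivAt_const x (1 : ℝ)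
    · have : legendreP (0 + 1) = fun y => y := by funext y; simp [legendreP]
      rw [this]
      simpa [legendreD, legendreP] using hasDerivAt_id' x
  | succ n ih =>
    refine ⟨ih.2, ?_⟩
    have hf : legendreP (n + 1 + 1) = fun y =>
        ((2 * (n : ℝ) + 3) * y * legendreP (n + 1) y - ((n : ℝ) + 1) * legendreP n y) /
          ((n : ℝ) + 2) := by
      funext y; rw [legendreP]
    rw [hf]
    have h := (((((hasDerivAt_id' x).const_mul (2 * (n : ℝ) + 3)).mul ih.2).sub
      (ih.1.const_mul ((n : ℝ) + 1))).div_const ((n : ℝ) + 2))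
    refine h.congr_deriv ?_
    have hne : ((n : ℝ) + 2) ≠ 0 := by positivity
    have hr := legendreP_succ_rel n x
    have h3 : legendreD (n + 1) x = x * legendreD n x + ((n : ℝ) + 1) * legendreP n x := by
      rw [legendreD]
    have h4 : legendreD (n + 1 + 1) x
        = x * legendreD (n + 1) x + ((n : ℝ) + 1 + 1) * legendreP (n + 1) x := by
      rw [legendreD]; push_cast; ring
    rw [h4, div_eq_iff hne, h3]
    linear_combination (-(n : ℝ) - 1) * hr

lemma legendreP_pos (n : ℕ) (x : ℝ) (hx : 1 ≤ x) :
    0 < legendreP n x ∧ 0 ≤ legendreD n x := by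
  induction n with
  | zero => simp [legendreP, legendreD]
  | succ n ih =>
    obtain ⟨h1, h2⟩ := ih
    have hx2 : 0 ≤ x ^ 2 - 1 := by nlinarith
    have hr := legendreP_succ_rel n x
    constructor
    · have : 0 < ((n : ℝ) + 1) * legendreP (n + 1) x := by
        rw [hr]; positivity
      exact pos_of_mul_pos_right this (by positivity)
    · rw [legendreD]; positivity

lemma legendreP_one (n : ℕ) : legendreP n 1 = 1 := by
  induction n with
  | zero => simp [legendreP]
  | succ n ih =>
    have hr := legendreP_succ_rel n 1
    rw [ih] at hr
    have hne : ((n : ℝ) + 1) ≠ 0 := by positivity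
    apply mul_left_cancel₀ hne
    linear_combination hr

lemma legendre_key (n : ℕ) (t : ℝ) (ht : 1 ≤ t) :
    ((n : ℝ) + 1) * t * legendreP n ((t + t⁻¹) / 2)
      ≤ ((n : ℝ) + 2) * legendreP (n + 1) ((t + t⁻¹) / 2) := by
  set F : ℝ → ℝ := fun t => t ^ (n + 1) * (((n : ℝ) + 2) * legendreP (n + 1) ((t + t⁻¹) / 2)
    - ((n : ℝ) + 1) * t * legendreP n ((t + t⁻¹) / 2)) with hF
  have hd : ∀ s : ℝ, 1 ≤ s → HasDerivAt F
      (s ^ (n + 1) * ((s - s⁻¹) / 2) * legendreD n ((s + s⁻¹) / 2)) s := by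
    intro s hs
    have hs0 : s ≠ 0 := by positivity
    have hx : HasDerivAt (fun t : ℝ => (t + t⁻¹) / 2) ((1 + -(s ^ 2)⁻¹) / 2) s :=
      ((hasDerivAt_id' s).add (hasDerivAt_inv hs0)).div_const 2
    have hp := (legendreP_hasDerivAt n ((s + s⁻¹) / 2)).1.comp s hx
    have hq := (legendreP_hasDerivAt n ((s + s⁻¹) / 2)).2.comp s hx
    have h := (hasDerivAt_pow (n + 1) s).mul ((hq.const_mul ((n : ℝ) + 2)).sub
      (((hasDerivAt_id' s).const_mul ((n : ℝ) + 1)).mul hp))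
    refine h.congr_deriv ?_
    have hr := legendreP_succ_rel n ((s + s⁻¹) / 2)
    have h3 : legendreD (n + 1) ((s + s⁻¹) / 2) = ((s + s⁻¹) / 2) *
      legendreD n ((s + s⁻¹) / 2) + ((n : ℝ) + 1) * legendreP n ((s + s⁻¹) / 2) := by
      rw [legendreD]
    simp only [Function.comp, Pi.mul_apply, Pi.sub_apply]
    rw [h3]
    generalize legendreP n ((s + s⁻¹) / 2) = p at *
    generalize legendreP (n + 1) ((s + s⁻¹) / 2) = p1 at *
    generalize legendreD n ((s + s⁻¹) / 2) = d at *
    have hi : s * s⁻¹ = 1 := mul_inv_cancel₀ hs0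
    rw [← inv_pow]
    generalize s⁻¹ = r at *
    simp only [Nat.add_sub_cancel, pow_succ]
    push_cast
    have e : s * (1 + -(1 * r * r)) = s - r := by linear_combination (-r) * hi
    have e' : (s + r) ^ 2 / 4 - 1 = ((s - r) / 2) ^ 2 := by linear_combination hi
    have hr' : ((n : ℝ) + 1) * p1 = ((s - r) / 2) ^ 2 * d + ((n : ℝ) + 1) * ((s + r) / 2) * p := by
      rw [← e']; linear_combination hr
    linear_combination (s ^ n) * ((n : ℝ) + 2) * hr' +
      (s ^ n) / 2 * (((n : ℝ) + 2) * ((s + r) / 2 * d + (n + 1) * p) - (n + 1) * s * d) * e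
  have hmono : MonotoneOn F (Set.Ici 1) := by
    apply monotoneOn_of_deriv_nonneg (convex_Ici 1)
    · exact fun s hs => (hd s hs).continuousAt.continuousWithinAt
    · intro s hs
      rw [interior_Ici] at hs
      exact (hd s (le_of_lt hs)).differentiableAt.differentiableWithinAt
    · intro s hs
      rw [interior_Ici] at hs
      have hs1 : 1 < s := hs
      rw [(hd s hs1.le).deriv]
      have hs0 : 0 < s := by linarith
      have hi : s * s⁻¹ = 1 := mul_inv_cancel₀ hs0.ne'
      have hr : 0 < s⁻¹ := by positivity
      have hr1 : s⁻¹ ≤ 1 := inv_le_one_of_one_le₀ hs1.le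
      have hx : 1 ≤ (s + s⁻¹) / 2 := by nlinarith [sq_nonneg (s - s⁻¹)]
      have := (legendreP_pos n _ hx).2
      have h2 : 0 ≤ (s - s⁻¹) / 2 := by linarith
      positivity
  have h1 := hmono (Set.mem_Ici.2 le_rfl) (Set.mem_Ici.2 ht) ht
  have hF1 : F 1 = 1 := by
    simp only [hF]
    norm_num [legendreP_one]
  rw [hF1] at h1
  have ht0 : 0 < t ^ (n + 1) := by positivity
  have : 0 < (((n : ℝ) + 2) * legendreP (n + 1) ((t + t⁻¹) / 2)
    - ((n : ℝ) + 1) * t * legendreP n ((t + t⁻¹) / 2)) :=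
    pos_of_mul_pos_right (lt_of_lt_of_le one_pos h1) ht0.le
  linarith

lemma legendre_ab (n : ℕ) (a b : ℝ) (hb : 0 < b) (hab : b < a) :
    (a ^ 2 * (((n : ℝ) + 1) / 2) - b ^ 2 * (((n : ℝ) + 1) / 2 + 1)) *
        legendreP (n + 1) ((a ^ 2 + b ^ 2) / (2 * (a * b)))
      ≤ (a ^ 2 - b ^ 2) ^ 2 / (4 * (a * b)) *
        legendreD (n + 1) ((a ^ 2 + b ^ 2) / (2 * (a * b))) := by
  have ha : 0 < a := hb.trans hab
  have hk := legendre_key n (a / b) ((one_le_div hb).2 hab.le)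
  have hx : (a / b + (a / b)⁻¹) / 2 = (a ^ 2 + b ^ 2) / (2 * (a * b)) := by
    field_simp
  rw [hx] at hk
  have hr := legendreP_succ_rel n ((a ^ 2 + b ^ 2) / (2 * (a * b)))
  set x := (a ^ 2 + b ^ 2) / (2 * (a * b)) with hxd
  have hX : 2 * (a * b) * x = a ^ 2 + b ^ 2 := by
    rw [hxd]; field_simp
  have h3 : legendreD (n + 1) x = x * legendreD n x + ((n : ℝ) + 1) * legendreP n x := by
    rw [legendreD]
  have hW : (a ^ 2 - b ^ 2) ^ 2 / (4 * (a * b)) = a * b * (x ^ 2 - 1) := by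
    rw [hxd]; field_simp; ring
  have hk2 : ((n : ℝ) + 1) * a * b * legendreP n x ≤ ((n : ℝ) + 2) * b ^ 2 * legendreP (n + 1) x := by
    have := mul_le_mul_of_nonneg_left hk (sq_nonneg b)
    have e : b ^ 2 * (((n : ℝ) + 1) * (a / b) * legendreP n x)
      = ((n : ℝ) + 1) * a * b * legendreP n x := by field_simp
    rw [e] at this
    linarith
  have e2 : (a ^ 2 - b ^ 2) ^ 2 / (4 * (a * b)) * legendreD (n + 1) x
      = ((n : ℝ) + 1) * ((a ^ 2 + b ^ 2) / 2 * legendreP (n + 1) x - a * b * legendreP n x) := by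
    rw [hW, h3, ← hX]
    linear_combination (-(a * b * x)) * hr
  rw [e2]
  linarith

lemma legendre_anti (n : ℕ) (a : ℝ) :
    AntitoneOn (fun b : ℝ => (a ^ 2 - b ^ 2) * b ^ (n + 1) *
      legendreP (n + 1) ((a ^ 2 + b ^ 2) / (2 * (a * b)))) (Set.Ioo 0 a) := by
  have hd : ∀ b ∈ Set.Ioo 0 a, HasDerivAt (fun b : ℝ => (a ^ 2 - b ^ 2) * b ^ (n + 1) *
      legendreP (n + 1) ((a ^ 2 + b ^ 2) / (2 * (a * b))))
      (2 * b ^ n * ((a ^ 2 * (((n : ℝ) + 1) / 2) - b ^ 2 * (((n : ℝ) + 1) / 2 + 1)) *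
        legendreP (n + 1) ((a ^ 2 + b ^ 2) / (2 * (a * b)))
      - (a ^ 2 - b ^ 2) ^ 2 / (4 * (a * b)) *
        legendreD (n + 1) ((a ^ 2 + b ^ 2) / (2 * (a * b))))) b := by
    intro b hb
    have hb0 : b ≠ 0 := hb.1.ne'
    have ha0 : a ≠ 0 := (hb.1.trans hb.2).ne'
    have hx : HasDerivAt (fun b : ℝ => (a ^ 2 + b ^ 2) / (2 * (a * b)))
        (-(a ^ 2 - b ^ 2) / (2 * a * b ^ 2)) b := by
      have h := ((hasDerivAt_pow 2 b).const_add (a ^ 2)).div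
        (((hasDerivAt_id' b).const_mul a).const_mul 2) (by positivity)
      refine h.congr_deriv ?_
      field_simp
      ring
    have hq := (legendreP_hasDerivAt n ((a ^ 2 + b ^ 2) / (2 * (a * b)))).2.comp b hx
    have h := (((hasDerivAt_pow 2 b).const_sub (a ^ 2)).mul (hasDerivAt_pow (n + 1) b)).mul hq
    refine h.congr_deriv ?_
    simp only [Function.comp, Pi.mul_apply]
    generalize legendreP (n + 1) ((a ^ 2 + b ^ 2) / (2 * (a * b))) = p
    generalize legendreD (n + 1) ((a ^ 2 + b ^ 2) / (2 * (a * b))) = d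
    simp only [Nat.add_sub_cancel, pow_succ]
    push_cast
    field_simp
    ring
  apply antitoneOn_of_deriv_nonpos (convex_Ioo 0 a)
  · exact fun s hs => (hd s hs).continuousAt.continuousWithinAt
  · intro s hs
    rw [interior_Ioo] at hs
    exact (hd s hs).differentiableAt.differentiableWithinAt
  · intro s hs
    rw [interior_Ioo] at hs
    rw [(hd s hs).deriv]
    have h1 := legendre_ab n a s hs.1 hs.2
    have h2 : 0 < s ^ n := pow_pos hs.1 n
    exact mul_nonpos_of_nonneg_of_nonpos (by positivity) (by linarith)

/-- For `j ≥ 1` and `λ₁ > λ₂ > 0`, with `x = (λ₁+λ₂)/(2√(λ₁λ₂))`,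
`(λ₁ j/2 - λ₂ (j/2+1)) P_j(x) ≤ ((λ₁-λ₂)²/(4√(λ₁λ₂))) P_j'(x)`; consequently, for each fixed
`λ₁ > 0`, the function `λ₂ ↦ (λ₁-λ₂) λ₂^{j/2} P_j((λ₁+λ₂)/(2√(λ₁λ₂)))` is nonincreasing on
`(0, λ₁)`. -/
theorem legendre_derivative_inequality_and_antitone (j : ℕ) (hj : 1 ≤ j) :
    (∀ l1 l2 : ℝ, 0 < l2 → l2 < l1 →
        (l1 * ((j : ℝ) / 2) - l2 * ((j : ℝ) / 2 + 1)) *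
            legendreP j ((l1 + l2) / (2 * Real.sqrt (l1 * l2)))
          ≤ (l1 - l2) ^ 2 / (4 * Real.sqrt (l1 * l2)) *
              deriv (legendreP j) ((l1 + l2) / (2 * Real.sqrt (l1 * l2))))
    ∧ ∀ l1 : ℝ, 0 < l1 →
        AntitoneOn
          (fun l2 : ℝ =>
            (l1 - l2) * l2 ^ ((j : ℝ) / 2) *
              legendreP j ((l1 + l2) / (2 * Real.sqrt (l1 * l2))))
          (Set.Ioo 0 l1) := by
  obtain ⟨n, rfl⟩ : ∃ n, j = n + 1 := ⟨j - 1, by omega⟩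
  constructor
  · intro l1 l2 h2 h12
    have h1 : 0 < l1 := h2.trans h12
    rw [(legendreP_hasDerivAt n _).2.deriv, Real.sqrt_mul h1.le]
    have h := legendre_ab n (Real.sqrt l1) (Real.sqrt l2) (Real.sqrt_pos.2 h2)
      (Real.sqrt_lt_sqrt h2.le h12)
    rw [Real.sq_sqrt h1.le, Real.sq_sqrt h2.le] at h
    push_cast
    exact h
  · intro l1 h1 u hu v hv huv
    have key : ∀ w ∈ Set.Ioo 0 l1, (l1 - w) * w ^ (((n + 1 : ℕ) : ℝ) / 2) *
        legendreP (n + 1) ((l1 + w) / (2 * Real.sqrt (l1 * w))) =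
        (Real.sqrt l1 ^ 2 - Real.sqrt w ^ 2) * Real.sqrt w ^ (n + 1) *
        legendreP (n + 1) ((Real.sqrt l1 ^ 2 + Real.sqrt w ^ 2) /
          (2 * (Real.sqrt l1 * Real.sqrt w))) := by
      intro w hw
      rw [Real.sqrt_mul h1.le, Real.sq_sqrt h1.le, Real.sq_sqrt hw.1.le,
        Real.rpow_div_two_eq_sqrt _ hw.1.le, Real.rpow_natCast]
    have hm : ∀ w ∈ Set.Ioo 0 l1, Real.sqrt w ∈ Set.Ioo 0 (Real.sqrt l1) := fun w hw =>
      ⟨Real.sqrt_pos.2 hw.1, Real.sqrt_lt_sqrt hw.1.le hw.2⟩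
    have h := legendre_anti n (Real.sqrt l1) (hm u hu) (hm v hv) (Real.sqrt_le_sqrt huv)
    simp only at h ⊢
    rw [key u hu, key v hv]
    exact h
end

section
/- Let p ≥ 2. For i = 1, 2, let μ₁⁽ⁱ⁾ ∈ ℝ^p and βⁱ ∈ ℝ be such that (1 + (β¹)²)·(μ₁⁽¹⁾)ᵀμ₁⁽¹⁾ = (1 + (β²)²)·(μ₁⁽²⁾)ᵀμ₁⁽²⁾. Let Xⁱ ∼ N(μ₁⁽ⁱ⁾, I_p) and Yⁱ ∼ N(βⁱμ₁⁽ⁱ⁾, I_p) be independent, and let λ₂(Sⁱ) be the smallest eigenvalue of Sⁱ = (Xⁱ Yⁱ)ᵀ(Xⁱ Yⁱ). Then λ₂(S¹) and λ₂(S²) have the same distribution; that is, the distribution of the smallest eigenvalue depends on (β, μ₁) only through the noncentrality parameter κ = (1 + β²)·μ₁ᵀμ₁. -/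
open MeasureTheory ProbabilityTheory Matrix

/-- The smaller root formula for the Gram matrix of two vectors. -/
noncomputable def gramMin (p : ℕ) (x y : EuclideanSpace ℝ (Fin p)) : ℝ :=
  ((inner ℝ x x + inner ℝ y y) -
    Real.sqrt ((inner ℝ x x + inner ℝ y y) ^ 2 -
      4 * (inner ℝ x x * inner ℝ y y - inner ℝ x y ^ 2))) / 2

lemma gramMin_measurable (p : ℕ) :
    Measurable (fun z : EuclideanSpace ℝ (Fin p) × EuclideanSpace ℝ (Fin p) =>
      gramMin p z.1 z.2) := by
  apply Continuous.measurable
  unfold gramMin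
  fun_prop

lemma iInf_eigenvalues_eq (p : ℕ) (x y : Fin p → ℝ)
    (h : ((colMatrix p x y)ᵀ * colMatrix p x y).IsHermitian) :
    ⨅ j, h.eigenvalues j = gramMin p (WithLp.toLp 2 x) (WithLp.toLp 2 y) := by
  have ht := h.trace_eq_sum_eigenvalues
  have hd := h.det_eq_prod_eigenvalues
  generalize h.eigenvalues = e at ht hd ⊢
  simp only [Matrix.trace_fin_two, Matrix.det_fin_two, Fin.sum_univ_two, Fin.prod_univ_two,
    Matrix.mul_apply, Matrix.transpose_apply, colMatrix, Matrix.of_apply, RCLike.ofReal_real_eq_id,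
    id, Matrix.cons_val_zero, Matrix.cons_val_one] at ht hd
  have hc : ∑ i, y i * x i = ∑ i, x i * y i := Finset.sum_congr rfl fun i _ => mul_comm _ _
  unfold gramMin
  simp only [EuclideanSpace.inner_toLp_toLp, dotProduct, star_trivial]
  rw [hc] at hd ⊢
  rw [ht]
  have hd' : (∑ i, x i * x i) * (∑ i, y i * y i) - (∑ i, x i * y i) ^ 2
      = e 0 * e 1 := by
    rw [← hd]; ring
  rw [hd']
  have : (e 0 + e 1) ^ 2 - 4 * (e 0 * e 1) = (e 0 - e 1) ^ 2 := by ring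
  rw [this, Real.sqrt_sq_eq_abs]
  have hI : ⨅ j, e j = min (e 0) (e 1) := by
    apply le_antisymm
    · exact le_min (ciInf_le (Set.finite_range e).bddBelow 0)
        (ciInf_le (Set.finite_range e).bddBelow 1)
    · apply le_ciInf
      intro j
      fin_cases j
      · exact min_le_left _ _
      · exact min_le_right _ _
  rw [hI, min_def]
  split_ifs with hle
  · rw [abs_of_nonpos (by linarith)]; ring
  · rw [abs_of_nonneg (by linarith)]; ring

lemma mvGaussianId_eq (p : ℕ) (μ : Fin p → ℝ) :
    mvGaussianId p μ = (stdGaussian (EuclideanSpace ℝ (Fin p))).map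
      (fun x => WithLp.ofLp (WithLp.toLp 2 μ + x)) := by
  rw [← map_pi_eq_stdGaussian, Measure.map_map (by fun_prop) (by fun_prop)]
  have h := Measure.pi_map_pi (μ := fun _ : Fin p => gaussianReal 0 1)
    (f := fun i => fun x : ℝ => μ i + x) (fun i => by fun_prop)
  unfold mvGaussianId
  simp only [gaussianReal_map_const_add, zero_add] at h
  rw [← h]
  rfl

lemma stdGaussian_prod_eq {E : Type*} [NormedAddCommGroup E] [InnerProductSpace ℝ E]
    [FiniteDimensional ℝ E] [MeasurableSpace E] [BorelSpace E] :
    (((stdGaussian E).prod (stdGaussian E)).map (WithLp.toLp 2) : Measure (WithLp 2 (E × E)))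
      = stdGaussian (WithLp 2 (E × E)) := by
  have : SecondCountableTopology E := inferInstance
  apply Measure.ext_of_charFun
  ext t
  rw [charFun_prod, charFun_stdGaussian, charFun_stdGaussian, charFun_stdGaussian,
    ← Complex.exp_add]
  congr 1
  rw [← Complex.ofReal_pow ‖t‖, WithLp.prod_norm_sq_eq_of_L2]
  simp only [WithLp.fst, WithLp.snd]
  push_cast
  ring

/-- Rotation by `(c, s)` of the two columns followed by an isometry `Q` of each column. -/
noncomputable def rotMap {E : Type*} [NormedAddCommGroup E] [InnerProductSpace ℝ E]
    (Q : E ≃ₗᵢ[ℝ] E) (c s : ℝ) (h : c ^ 2 + s ^ 2 = 1) :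
    WithLp 2 (E × E) →ₗᵢ[ℝ] WithLp 2 (E × E) where
  toFun z := WithLp.toLp 2 (Q (c • z.fst + s • z.snd), Q (-s • z.fst + c • z.snd))
  map_add' z w := by
    apply WithLp.ofLp_injective
    ext <;> simp <;> abel
  map_smul' a z := by
    apply WithLp.ofLp_injective
    ext <;> simp [smul_smul, mul_comm]
  norm_map' z := by
    rw [← sq_eq_sq₀ (norm_nonneg _) (norm_nonneg _), WithLp.prod_norm_sq_eq_of_L2,
      WithLp.prod_norm_sq_eq_of_L2]
    simp only [LinearMap.coe_mk, AddHom.coe_mk, WithLp.toLp_fst, WithLp.toLp_snd,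
      LinearIsometryEquiv.norm_map]
    rw [norm_add_sq_real, norm_add_sq_real]
    simp only [norm_smul, inner_smul_left, inner_smul_right, mul_pow, Real.norm_eq_abs, sq_abs,
      conj_trivial, neg_sq]
    linear_combination (‖z.fst‖ ^ 2 + ‖z.snd‖ ^ 2) * h

lemma prod_map_rot {E : Type*} [NormedAddCommGroup E] [InnerProductSpace ℝ E]
    [FiniteDimensional ℝ E] [MeasurableSpace E] [BorelSpace E]
    (Q : E ≃ₗᵢ[ℝ] E) (c s : ℝ) (h : c ^ 2 + s ^ 2 = 1) :
    ((stdGaussian E).prod (stdGaussian E)).map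
      (fun z => (Q (c • z.1 + s • z.2), Q (-s • z.1 + c • z.2)))
      = (stdGaussian E).prod (stdGaussian E) := by
  have : SecondCountableTopology E := inferInstance
  have h1 := stdGaussian_map ((rotMap Q c s h).toLinearIsometryEquiv rfl)
  rw [← stdGaussian_prod_eq, Measure.map_map (by fun_prop) (by fun_prop)] at h1
  have h2 := congrArg (Measure.map (WithLp.ofLp : WithLp 2 (E × E) → E × E)) h1
  rw [Measure.map_map (by fun_prop) (by fun_prop), Measure.map_map (by fun_prop) (by fun_prop)] at h2
  have h3 : (WithLp.ofLp : WithLp 2 (E × E) → E × E) ∘ (WithLp.toLp 2) = id := rfl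
  rw [h3, Measure.map_id] at h2
  exact h2

lemma gramMin_rot (p : ℕ) (Q : EuclideanSpace ℝ (Fin p) ≃ₗᵢ[ℝ] EuclideanSpace ℝ (Fin p))
    (c s : ℝ) (h : c ^ 2 + s ^ 2 = 1) (x y : EuclideanSpace ℝ (Fin p)) :
    gramMin p (Q (c • x + s • y)) (Q (-s • x + c • y)) = gramMin p x y := by
  unfold gramMin
  simp only [LinearIsometryEquiv.inner_map_map, inner_add_left, inner_add_right, inner_smul_left,
    inner_smul_right, conj_trivial, real_inner_comm x y]
  generalize inner ℝ x x = a
  generalize inner ℝ y y = b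
  generalize inner ℝ x y = d
  have hT : ∀ t₁ t₂ d₁ : ℝ, t₁ = a + b → d₁ = a * b - d ^ 2 → t₂ = t₁ →
      (t₁ - Real.sqrt (t₂ ^ 2 - 4 * d₁)) / 2
      = (a + b - Real.sqrt ((a + b) ^ 2 - 4 * (a * b - d ^ 2))) / 2 := by
    intro t₁ t₂ d₁ h1 h2 h3
    rw [h3, h1, h2]
  apply hT
  · linear_combination (a + b) * h
  · linear_combination (a * b - d ^ 2) * (c ^ 2 + s ^ 2 + 1) * h
  · rfl

attribute [irreducible] gramMin

lemma gramMin_measurable_comp {α : Type*} [MeasurableSpace α] (p : ℕ)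
    (f g : α → EuclideanSpace ℝ (Fin p)) (hf : Measurable f) (hg : Measurable g) :
    Measurable (fun a => gramMin p (f a) (g a)) :=
  (gramMin_measurable p).comp (hf.prodMk hg)

lemma rot_law (p : ℕ) (m : EuclideanSpace ℝ (Fin p)) (β : ℝ) (v : EuclideanSpace ℝ (Fin p))
    (hv : ‖v‖ ^ 2 = (1 + β ^ 2) * ‖m‖ ^ 2) :
    ((stdGaussian (EuclideanSpace ℝ (Fin p))).prod
          (stdGaussian (EuclideanSpace ℝ (Fin p)))).map
          ((fun w : (Fin p → ℝ) × (Fin p → ℝ) =>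
      gramMin p (WithLp.toLp 2 w.1) (WithLp.toLp 2 w.2)) ∘
        Prod.map (fun x : EuclideanSpace ℝ (Fin p) => WithLp.ofLp (m + x))
          (fun x : EuclideanSpace ℝ (Fin p) => WithLp.ofLp (β • m + x)))
      = ((stdGaussian (EuclideanSpace ℝ (Fin p))).prod
          (stdGaussian (EuclideanSpace ℝ (Fin p)))).map
          (fun z => gramMin p (v + z.1) z.2) := by
  -- the rotation
  have hpos : 0 < 1 + β ^ 2 := by positivity
  obtain ⟨r, hr0, hr2⟩ : ∃ r : ℝ, 0 < r ∧ r ^ 2 = 1 + β ^ 2 :=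
    ⟨_, Real.sqrt_pos.2 hpos, Real.sq_sqrt hpos.le⟩
  have hcs : (1 / r) ^ 2 + (β / r) ^ 2 = 1 := by
    field_simp
    linarith
  have hnm : ‖r • m‖ = ‖v‖ := by
    rw [← sq_eq_sq₀ (norm_nonneg _) (norm_nonneg _), hv, norm_smul, mul_pow, Real.norm_eq_abs,
      sq_abs, hr2]
  obtain ⟨Q, hQ⟩ : ∃ Q : EuclideanSpace ℝ (Fin p) ≃ₗᵢ[ℝ] EuclideanSpace ℝ (Fin p),
      Q (r • m) = v := ⟨_, Submodule.reflection_sub hnm⟩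
  conv_rhs => rw [← prod_map_rot Q (1 / r) (β / r) hcs]
  have hg2 : Measurable (fun z : EuclideanSpace ℝ (Fin p) × EuclideanSpace ℝ (Fin p) =>
      gramMin p (v + z.1) z.2) :=
    gramMin_measurable_comp p _ _ (by fun_prop) (by fun_prop)
  rw [Measure.map_map hg2 (by fun_prop)]
  congr 1
  funext z
  simp only [Function.comp_apply, Prod.map_apply, Prod.map_fst, Prod.map_snd, WithLp.toLp_ofLp]
  rw [← gramMin_rot p Q (1 / r) (β / r) hcs]
  congr 1
  · rw [← hQ, ← map_add]
    congr 1
    have : r = 1 / r + β / r * β := by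
      field_simp
      linarith
    have h2 : r • m = (1 / r) • m + (β / r * β) • m := by rw [← add_smul, ← this]
    rw [h2]
    simp only [smul_add, smul_smul]
    abel
  · congr 1
    simp only [smul_add, smul_smul]
    have : β / r = 1 / r * β := by ring
    rw [this, neg_smul]
    abel

lemma law_gramMin {Ω : Type*} [MeasureSpace Ω] [IsProbabilityMeasure (ℙ : Measure Ω)]
    (p : ℕ) (μ : Fin p → ℝ) (β : ℝ) (v : EuclideanSpace ℝ (Fin p))
    (hv : ‖v‖ ^ 2 = (1 + β ^ 2) * ∑ i, (μ i) ^ 2)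
    (X Y : Ω → Fin p → ℝ) (hX : Measurable X) (hY : Measurable Y)
    (hXlaw : Measure.map X ℙ = mvGaussianId p μ)
    (hYlaw : Measure.map Y ℙ = mvGaussianId p (fun i => β * μ i))
    (hindep : IndepFun X Y ℙ) :
    Measure.map (fun ω => gramMin p (WithLp.toLp 2 (X ω)) (WithLp.toLp 2 (Y ω))) (ℙ : Measure Ω)
      = ((stdGaussian (EuclideanSpace ℝ (Fin p))).prod
          (stdGaussian (EuclideanSpace ℝ (Fin p)))).map
          (fun z => gramMin p (v + z.1) z.2) := by
  obtain ⟨m, hm⟩ : ∃ m : EuclideanSpace ℝ (Fin p), m = WithLp.toLp 2 μ := ⟨_, rfl⟩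
  have hβm : (WithLp.toLp 2 (fun i => β * μ i) : EuclideanSpace ℝ (Fin p)) = β • m := by
    rw [hm]; rfl
  have hlaw := (indepFun_iff_map_prod_eq_prod_map_map hX.aemeasurable hY.aemeasurable).1 hindep
  have hf1 : Measurable (fun x : EuclideanSpace ℝ (Fin p) => WithLp.ofLp (m + x)) := by fun_prop
  have hf2 : Measurable (fun x : EuclideanSpace ℝ (Fin p) => WithLp.ofLp (β • m + x)) := by fun_prop
  rw [hXlaw, hYlaw, mvGaussianId_eq, mvGaussianId_eq, hβm, ← hm,
    Measure.map_prod_map _ _ hf1 hf2] at hlaw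
  have hF : Measurable (fun w : (Fin p → ℝ) × (Fin p → ℝ) =>
      gramMin p (WithLp.toLp 2 w.1) (WithLp.toLp 2 w.2)) :=
    gramMin_measurable_comp p _ _ (by fun_prop) (by fun_prop)
  rw [← rot_law p m β v (by rw [hv, hm, EuclideanSpace.norm_sq_eq]; simp),
    ← Measure.map_map hF (hf1.prodMap hf2), ← hlaw, Measure.map_map hF (hX.prodMk hY)]
  rfl

/-- The distribution of the smallest eigenvalue of `S = (X Y)ᵀ (X Y)`, where
`X ∼ N(μ₁, I_p)` and `Y ∼ N(βμ₁, I_p)` are independent, depends on `(β, μ₁)` only through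
the noncentrality parameter `κ = (1 + β²) μ₁ᵀ μ₁`. -/
theorem smallest_eigenvalue_distribution_depends_only_on_kappa
    {Ω₁ : Type*} [MeasureSpace Ω₁] [IsProbabilityMeasure (ℙ : Measure Ω₁)]
    {Ω₂ : Type*} [MeasureSpace Ω₂] [IsProbabilityMeasure (ℙ : Measure Ω₂)]
    (p : ℕ) (hp : 2 ≤ p) (μ₁ μ₂ : Fin p → ℝ) (β₁ β₂ : ℝ)
    (hκ : (1 + β₁ ^ 2) * ∑ i, (μ₁ i) ^ 2 = (1 + β₂ ^ 2) * ∑ i, (μ₂ i) ^ 2)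
    (X₁ Y₁ : Ω₁ → Fin p → ℝ) (hX₁ : Measurable X₁) (hY₁ : Measurable Y₁)
    (hX₁law : Measure.map X₁ ℙ = mvGaussianId p μ₁)
    (hY₁law : Measure.map Y₁ ℙ = mvGaussianId p (fun i => β₁ * μ₁ i))
    (hindep₁ : IndepFun X₁ Y₁ ℙ)
    (X₂ Y₂ : Ω₂ → Fin p → ℝ) (hX₂ : Measurable X₂) (hY₂ : Measurable Y₂)
    (hX₂law : Measure.map X₂ ℙ = mvGaussianId p μ₂)
    (hY₂law : Measure.map Y₂ ℙ = mvGaussianId p (fun i => β₂ * μ₂ i))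
    (hindep₂ : IndepFun X₂ Y₂ ℙ)
    (hS₁ : ∀ ω, ((colMatrix p (X₁ ω) (Y₁ ω))ᵀ * colMatrix p (X₁ ω) (Y₁ ω)).IsHermitian)
    (hS₂ : ∀ ω, ((colMatrix p (X₂ ω) (Y₂ ω))ᵀ * colMatrix p (X₂ ω) (Y₂ ω)).IsHermitian) :
    Measure.map (fun ω => ⨅ j, (hS₁ ω).eigenvalues j) (ℙ : Measure Ω₁)
      = Measure.map (fun ω => ⨅ j, (hS₂ ω).eigenvalues j) (ℙ : Measure Ω₂) := by
  have hv : ‖Real.sqrt (1 + β₂ ^ 2) • (WithLp.toLp 2 μ₂ : EuclideanSpace ℝ (Fin p))‖ ^ 2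
      = (1 + β₂ ^ 2) * ∑ i, (μ₂ i) ^ 2 := by
    rw [norm_smul, mul_pow, Real.norm_eq_abs, sq_abs, Real.sq_sqrt (by positivity),
      EuclideanSpace.norm_sq_eq]
    simp
  simp only [iInf_eigenvalues_eq]
  rw [law_gramMin p μ₁ β₁ _ (hv.trans hκ.symm) X₁ Y₁ hX₁ hY₁ hX₁law hY₁law hindep₁,
    law_gramMin p μ₂ β₂ _ hv X₂ Y₂ hX₂ hY₂ hX₂law hY₂law hindep₂]
end
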